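/- Let X be a finite indecomposable rack, fix an element 1 ∈ X, and let n be the order of the permutation φ_1. Then x_1^n generates a normal (indeed central) subgroup of the enveloping group G_X, and the quotient group Ḡ_X = G_X / ⟨x_1^n⟩ is finite. -/

import Mathlib

open Quandles

theorem envel_induct {X : Type*} [Rack X] (P : Subgroup (Rack.EnvelGroup X))
    (h : ∀ x : X, (Rack.toEnvelGroup X x : Rack.EnvelGroup X) ∈ P) (g : Rack.EnvelGroup X) :
    g ∈ P := by
  induction g using Quotient.inductionOn with
  | h a =>
    induction a with
    | unit => exact P.one_mem
    | incl x => exact h x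
    | mul a b ha hb => exact P.mul_mem ha hb
    | inv a ha => exact P.inv_mem ha

theorem envel_gen_act {X : Type*} [Rack X] (x y : X) :
    (Rack.toEnvelGroup X (x ◃ y) : Rack.EnvelGroup X) =
      (Rack.toEnvelGroup X x : Rack.EnvelGroup X) * (Rack.toEnvelGroup X y : Rack.EnvelGroup X) *
        (Rack.toEnvelGroup X x : Rack.EnvelGroup X)⁻¹ :=
  (Rack.toEnvelGroup X).map_act

theorem envel_action_gen {X : Type*} [Rack X] (x : X) :
    Rack.envelAction (Rack.toEnvelGroup X x : Rack.EnvelGroup X) = Rack.act' x := by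
  ext y
  exact Rack.envelAction_prop x y

theorem envel_conj {X : Type*} [Rack X] (g : Rack.EnvelGroup X) : ∀ y : X,
    g * (Rack.toEnvelGroup X y : Rack.EnvelGroup X) * g⁻¹ =
      (Rack.toEnvelGroup X (Rack.envelAction g y) : Rack.EnvelGroup X) := by
  let P : Subgroup (Rack.EnvelGroup X) :=
    { carrier := {g | ∀ y : X, g * (Rack.toEnvelGroup X y : Rack.EnvelGroup X) * g⁻¹ =
        (Rack.toEnvelGroup X (Rack.envelAction g y) : Rack.EnvelGroup X)}
      one_mem' := by intro y; simp
      mul_mem' := by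
        intro a b ha hb y
        have h1 := hb y
        have h2 := ha (Rack.envelAction b y)
        rw [← h1] at h2
        rw [map_mul, Equiv.Perm.mul_apply, ← h2]
        group
      inv_mem' := by
        intro a ha y
        have h1 := ha (Rack.envelAction a⁻¹ y)
        rw [← Equiv.Perm.mul_apply, ← map_mul, mul_inv_cancel, map_one,
          Equiv.Perm.one_apply] at h1
        rw [← h1]
        group }
  refine envel_induct P (fun x y => ?_) g
  rw [envel_action_gen, Rack.act'_apply, envel_gen_act]

theorem envel_ker_central {X : Type*} [Rack X] (g : Rack.EnvelGroup X)
    (hg : Rack.envelAction g = 1) : g ∈ Subgroup.center (Rack.EnvelGroup X) := by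
  have h : ∀ k, k ∈ Subgroup.centralizer {g} := by
    refine envel_induct _ fun x => ?_
    have h1 := envel_conj g x
    rw [hg, Equiv.Perm.one_apply, mul_inv_eq_iff_eq_mul] at h1
    rw [Subgroup.mem_centralizer_singleton_iff]
    exact h1.symm
  rw [Subgroup.mem_center_iff]
  intro k
  have := Subgroup.mem_centralizer_singleton_iff.1 (h k)
  exact this

theorem envel_commutatorSet_finite {X : Type*} [Rack X] [Finite X] :
    Finite (commutatorSet (Rack.EnvelGroup X)) := by
  let ρ := (Rack.envelAction (R := X))
  let s : Equiv.Perm X → Rack.EnvelGroup X := Function.invFun ρ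
  have hs : ∀ g, ρ (s (ρ g)) = ρ g := fun g => Function.invFun_eq ⟨g, rfl⟩
  have hc : ∀ g, ∃ c, (∀ k, k * c = c * k) ∧ g = s (ρ g) * c := fun g =>
    ⟨(s (ρ g))⁻¹ * g, Subgroup.mem_center_iff.1 (envel_ker_central _ (by
      change ρ _ = 1
      rw [map_mul, map_inv, hs, inv_mul_cancel])), by group⟩
  refine Set.Finite.subset (Set.finite_range
    fun p : Equiv.Perm X × Equiv.Perm X => s p.1 * s p.2 * (s p.1)⁻¹ * (s p.2)⁻¹) ?_
  rintro _ ⟨g, h, rfl⟩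
  refine ⟨(ρ g, ρ h), ?_⟩
  change s (ρ g) * s (ρ h) * (s (ρ g))⁻¹ * (s (ρ h))⁻¹ = _
  obtain ⟨c, hc1, hc2⟩ := hc g
  obtain ⟨d, hd1, hd2⟩ := hc h
  generalize s (ρ g) = a at *
  generalize s (ρ h) = b at *
  subst hc2 hd2
  simp only [commutatorElement_def, mul_inv_rev]
  have e1 : a * c * (b * d) * (c⁻¹ * a⁻¹) = a * b * d * a⁻¹ := by
    rw [hc1 a, mul_assoc c, ← hc1 (a * (b * d))]; group
  rw [e1, mul_assoc (a * b) d, ← hd1 a⁻¹]; group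

/-- Let X be a finite indecomposable rack, fix 1 ∈ X (here `x1`), and let n be the order
of φ_1.  Then x_1^n generates a normal (indeed central) subgroup of the enveloping group
G_X, and the quotient Ḡ_X = G_X/⟨x_1^n⟩ is finite. -/
theorem envel_quotient_finite {X : Type*} [Rack X] [Finite X]
    (hind : ∀ x y : X,
      ∃ f ∈ Subgroup.closure (Set.range fun i : X => (Rack.act' i : Equiv.Perm X)), f x = y)
    (x1 : X) :
    (Rack.toEnvelGroup X x1 : Rack.EnvelGroup X) ^ orderOf (Rack.act' x1 : Equiv.Perm X) ∈
        Subgroup.center (Rack.EnvelGroup X) ∧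
      (Subgroup.zpowers ((Rack.toEnvelGroup X x1 : Rack.EnvelGroup X) ^
          orderOf (Rack.act' x1 : Equiv.Perm X))).Normal ∧
      Finite (Rack.EnvelGroup X ⧸ Subgroup.zpowers
        ((Rack.toEnvelGroup X x1 : Rack.EnvelGroup X) ^
          orderOf (Rack.act' x1 : Equiv.Perm X))) := by
  have hz : (Rack.toEnvelGroup X x1 : Rack.EnvelGroup X) ^
      orderOf (Rack.act' x1 : Equiv.Perm X) ∈ Subgroup.center (Rack.EnvelGroup X) := by
    apply envel_ker_central
    rw [map_pow, envel_action_gen, pow_orderOf_eq_one]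
  have hN : (Subgroup.zpowers ((Rack.toEnvelGroup X x1 : Rack.EnvelGroup X) ^
          orderOf (Rack.act' x1 : Equiv.Perm X))).Normal := by
    refine ⟨fun a ha g => ?_⟩
    have : a ∈ Subgroup.center (Rack.EnvelGroup X) :=
      (Subgroup.zpowers_le.2 hz) ha
    rw [Subgroup.mem_center_iff.1 this g]
    simpa using ha
  refine ⟨hz, hN, ?_⟩
  have := envel_commutatorSet_finite (X := X)
  have hn : 0 < orderOf (Rack.act' x1 : Equiv.Perm X) := orderOf_pos _
  have hlift : ∀ f ∈ Subgroup.closure (Set.range fun i : X => (Rack.act' i : Equiv.Perm X)),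
      f ∈ (Rack.envelAction (R := X)).range := by
    intro f hf
    refine (Subgroup.closure_le _).2 ?_ hf
    rintro _ ⟨i, rfl⟩
    exact ⟨_, envel_action_gen i⟩
  generalize orderOf (Rack.act' x1 : Equiv.Perm X) = n at *
  have hgen : ∀ g, g ∈ (Subgroup.zpowers (Abelianization.of
      (Rack.toEnvelGroup X x1 : Rack.EnvelGroup X))).comap Abelianization.of := by
    refine envel_induct _ fun x => ?_
    obtain ⟨f, hf, hfx⟩ := hind x1 x
    obtain ⟨g, rfl⟩ := hlift f hf
    have h1 := envel_conj g x1
    rw [hfx] at h1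
    rw [← h1, Subgroup.mem_comap, map_mul, map_mul, map_inv, mul_comm, inv_mul_cancel_left]
    exact Subgroup.mem_zpowers _
  generalize (Rack.toEnvelGroup X x1 : Rack.EnvelGroup X) = x at *
  refine Finite.of_surjective (fun p : Fin n × commutator (Rack.EnvelGroup X) =>
    ((p.2.1 * x ^ (p.1 : ℕ) : Rack.EnvelGroup X) :
      Rack.EnvelGroup X ⧸ Subgroup.zpowers (x ^ n))) ?_
  intro q
  obtain ⟨g, rfl⟩ := QuotientGroup.mk_surjective q
  obtain ⟨k, hk⟩ := Subgroup.mem_zpowers_iff.1 (Subgroup.mem_comap.1 (hgen g))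
  have hc : g * (x ^ k)⁻¹ ∈ commutator (Rack.EnvelGroup X) := by
    rw [← Abelianization.ker_of, MonoidHom.mem_ker, map_mul, map_inv, map_zpow, hk,
      mul_inv_cancel]
  have hn' : (0 : ℤ) < n := by exact_mod_cast hn
  have h0 := Int.emod_nonneg k hn'.ne'
  have h1 := Int.emod_lt_of_pos k hn'
  refine ⟨(⟨(k % n).toNat, by omega⟩, ⟨_, hc⟩), ?_⟩
  rw [QuotientGroup.eq]
  refine Subgroup.mem_zpowers_iff.2 ⟨k / n, ?_⟩
  have e : x ^ (k % n).toNat = x ^ (k % n) := by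
    rw [← zpow_natCast, Int.toNat_of_nonneg h0]
  simp only [e]
  rw [← zpow_natCast x n, ← zpow_mul]
  have e2 : (n : ℤ) * (k / n) = k - k % n := by
    have := Int.mul_ediv_add_emod k n
    omega
  rw [e2, zpow_sub]
  have e3 : x ^ k * (x ^ (k % (n : ℤ)))⁻¹ = (x ^ (k % (n : ℤ)))⁻¹ * x ^ k := by
    rw [← zpow_neg, ← zpow_add, ← zpow_add, add_comm]
  rw [e3]
  group
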